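/- Let d and M be positive integers, λ > 0, T > 0, C ≥ 0, and let h : ℝ^d → ℝ^d be Lipschitz continuous with Lipschitz constant C (for the Euclidean norm). Let X be an ℕ-valued random variable with the Poisson distribution with parameter λT/M. Then for every real number p ≥ 1, every z ∈ {−1, 1} and every x ∈ ℝ^d with ‖x‖ ≥ 1, E[exp(p·z·⟨x, h(x)⟩·‖x‖^{−2}·(X − λT/M))] ≤ exp((e^{p(C+‖h(0)‖)} + p·(C + ‖h(0)‖))·λT/M). -/

import Mathlib

open MeasureTheory
open scoped RealInnerProductSpace

/-!
For a Poisson variable `X` of rate `r`, the moment generating function of `X - r` at `t` is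
`exp ((e^t - 1 - t) r)`, and `e^t - 1 - t ≤ e^b + b` whenever `|t| ≤ b`. Here
`t = p z ⟪x, h x⟫ / ‖x‖²`: since `‖x‖ ≥ 1`, the Lipschitz bound gives the linear growth
`‖h x‖ ≤ (C + ‖h 0‖) ‖x‖`, so Cauchy–Schwarz yields `|t| ≤ p (C + ‖h 0‖)`.

The distribution of `X` is given through the outer measures of its level sets. These add up to the
total mass, which forces every preimage under `X` to be null-measurable, so `X` has a law.
-/

section

open ProbabilityTheory
open scoped NNReal Nat

section HasLaw

variable {Ω : Type*} [MeasurableSpace Ω] {P : Measure Ω}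

lemma nullMeasurableSet_of_measure_add_measure_compl_le [IsFiniteMeasure P] {s : Set Ω}
    (hs : P s + P sᶜ ≤ P Set.univ) : NullMeasurableSet s P := by
  set A := toMeasurable P s
  set B := toMeasurable P sᶜ
  have hsA : s ⊆ A := subset_toMeasurable P s
  have hsB : sᶜ ⊆ B := subset_toMeasurable P sᶜ
  have hunion : A ∪ B = Set.univ :=
    Set.univ_subset_iff.mp (s.union_compl_self ▸ Set.union_subset_union hsA hsB)
  have hinter : P (A ∩ B) = 0 := by
    have hadd : P Set.univ + P (A ∩ B) = P s + P sᶜ := by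
      rw [← hunion, measure_union_add_inter A (measurableSet_toMeasurable P sᶜ),
        measure_toMeasurable, measure_toMeasurable]
    exact nonpos_iff_eq_zero.mp <| ENNReal.le_of_add_le_add_left (measure_ne_top P Set.univ) <|
      (hadd.trans_le hs).trans_eq (add_zero _).symm
  have hdiff : P (A \ s) = 0 :=
    measure_mono_null (Set.subset_inter Set.sdiff_subset fun _ hω ↦ hsB hω.2) hinter
  exact (measurableSet_toMeasurable P s).nullMeasurableSet.congr
    ((ae_le_set.mpr hdiff).antisymm hsA.eventuallyLE)

variable {ι : Type*} [Countable ι] [MeasurableSpace ι] [MeasurableSingletonClass ι]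
  {ν : Measure ι} {X : Ω → ι}

lemma measure_preimage_le_of_forall_singleton (hX : ∀ i, P (X ⁻¹' {i}) ≤ ν {i}) (s : Set ι) :
    P (X ⁻¹' s) ≤ ν s := by
  calc P (X ⁻¹' s) = P (⋃ i ∈ s, X ⁻¹' {i}) := by rw [Set.biUnion_preimage_singleton]
    _ ≤ ∑' i : s, P (X ⁻¹' {(i : ι)}) := measure_biUnion_le P s.to_countable _
    _ ≤ ∑' i : s, ν {(i : ι)} := ENNReal.tsum_le_tsum fun i ↦ hX i
    _ = ν s := tsum_measure_preimage_singleton (f := id) s.to_countable fun i _ ↦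
      measurableSet_singleton i

lemma hasLaw_of_forall_measure_preimage_singleton_le [IsFiniteMeasure P]
    (hX : ∀ i, P (X ⁻¹' {i}) ≤ ν {i}) (huniv : ν Set.univ ≤ P Set.univ) : HasLaw X ν P := by
  have hpre := measure_preimage_le_of_forall_singleton hX
  have haemeas : AEMeasurable X P := NullMeasurable.aemeasurable fun s hs ↦
    nullMeasurableSet_of_measure_add_measure_compl_le <| calc
      P (X ⁻¹' s) + P (X ⁻¹' s)ᶜ ≤ ν s + ν sᶜ := add_le_add (hpre s) (hpre sᶜ)
      _ = ν Set.univ := measure_add_measure_compl hs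
      _ ≤ P Set.univ := huniv
  have hle : P.map X ≤ ν := Measure.le_iff.mpr fun s hs ↦
    (Measure.map_apply_of_aemeasurable haemeas hs).trans_le (hpre s)
  have hmass : P.map X Set.univ = ν Set.univ := by
    refine (hle Set.univ).antisymm (huniv.trans_eq ?_)
    rw [Measure.map_apply_of_aemeasurable haemeas MeasurableSet.univ, Set.preimage_univ]
  exact ⟨haemeas, Measure.eq_of_le_of_measure_univ_eq hle hmass⟩

end HasLaw

section Poisson

variable {Ω : Type*} [MeasurableSpace Ω] {P : Measure Ω} {X : Ω → ℕ} {r : ℝ≥0}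

lemma hasLaw_poissonMeasure_of_forall_measure_eq [IsProbabilityMeasure P]
    (hX : ∀ k, P {ω | X ω = k} = ENNReal.ofReal (Real.exp (-r) * r ^ k / k !)) :
    HasLaw X Po(r) P :=
  hasLaw_of_forall_measure_preimage_singleton_le
    (fun k ↦ ((hX k).trans (poissonMeasure_singleton r k).symm).le)
    (by simp only [measure_univ, le_refl])

lemma mgf_natCast_poissonMeasure (r : ℝ≥0) (t : ℝ) :
    mgf (Nat.cast : ℕ → ℝ) Po(r) t = Real.exp (r * (Real.exp t - 1)) := by
  have hterm (n : ℕ) : Real.exp (-r) * r ^ n / n ! * Real.exp (t * n) =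
      Real.exp (-r) * ((r * Real.exp t) ^ n / n !) := by
    rw [mul_pow, ← Real.exp_nat_mul, mul_comm t]
    ring
  simp only [mgf, integral_poissonMeasure, smul_eq_mul, hterm]
  rw [tsum_mul_left, (NormedSpace.expSeries_div_hasSum_exp (r * Real.exp t)).tsum_eq,
    ← Real.exp_eq_exp_ℝ, ← Real.exp_add]
  ring_nf

lemma mgf_sub_rate_of_hasLaw_poissonMeasure (hX : HasLaw X Po(r) P) (t : ℝ) :
    mgf (fun ω ↦ (X ω : ℝ) - r) P t = Real.exp ((Real.exp t - 1 - t) * r) := by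
  have hmgf : mgf (fun ω ↦ (X ω : ℝ)) P t = Real.exp (r * (Real.exp t - 1)) :=
    (hX.integral_comp .of_discrete).trans (mgf_natCast_poissonMeasure r t)
  simp only [sub_eq_add_neg (Nat.cast _), mgf_add_const, hmgf, ← Real.exp_add]
  ring_nf

lemma mgf_sub_rate_le_of_abs_le (hX : HasLaw X Po(r) P) {t b : ℝ} (htb : |t| ≤ b) :
    mgf (fun ω ↦ (X ω : ℝ) - r) P t ≤ Real.exp ((Real.exp b + b) * r) := by
  rw [mgf_sub_rate_of_hasLaw_poissonMeasure hX]
  obtain ⟨hlower, hupper⟩ := abs_le.mp htb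
  have hexp : Real.exp t ≤ Real.exp b := Real.exp_le_exp.mpr hupper
  gcongr
  linarith

end Poisson

section LinearGrowth

lemma norm_le_add_norm_mul_of_norm_sub_le {F : Type*} [SeminormedAddCommGroup F] {u v : F}
    {C R : ℝ} (huv : ‖u - v‖ ≤ C * R) (hR : 1 ≤ R) : ‖u‖ ≤ (C + ‖v‖) * R := by
  calc ‖u‖ ≤ ‖u - v‖ + ‖v‖ := norm_le_norm_sub_add u v
    _ ≤ C * R + ‖v‖ * R := add_le_add huv (le_mul_of_one_le_right (norm_nonneg v) hR)
    _ = (C + ‖v‖) * R := by ring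

variable {E : Type*} [NormedAddCommGroup E] [InnerProductSpace ℝ E]

lemma abs_inner_div_norm_sq_le {x v : E} {K : ℝ} (hx : 0 < ‖x‖) (hv : ‖v‖ ≤ K * ‖x‖) :
    |⟪x, v⟫ / ‖x‖ ^ 2| ≤ K := by
  rw [abs_div, abs_of_pos (pow_pos hx 2), div_le_iff₀ (pow_pos hx 2)]
  calc |⟪x, v⟫| ≤ ‖x‖ * ‖v‖ := abs_real_inner_le_norm x v
    _ ≤ ‖x‖ * (K * ‖x‖) := by gcongr
    _ = K * ‖x‖ ^ 2 := by ring

end LinearGrowth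

theorem poisson_taming_exp_bound_general {E : Type*} [NormedAddCommGroup E]
    [InnerProductSpace ℝ E] {h : E → E} {C : ℝ} {x : E} (hx : 1 ≤ ‖x‖)
    (hincr : ‖h x - h 0‖ ≤ C * ‖x‖) {Ω : Type*} [MeasurableSpace Ω] {P : Measure Ω} {X : Ω → ℕ}
    {r : ℝ≥0} (hX : HasLaw X Po(r) P) (c : ℝ) :
    ∫ ω, Real.exp (c * (⟪x, h x⟫ / ‖x‖ ^ 2) * ((X ω : ℝ) - r)) ∂P
      ≤ Real.exp ((Real.exp (|c| * (C + ‖h 0‖)) + |c| * (C + ‖h 0‖)) * r) := by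
  have hgrowth : ‖h x‖ ≤ (C + ‖h 0‖) * ‖x‖ := norm_le_add_norm_mul_of_norm_sub_le hincr hx
  have htilt : |c * (⟪x, h x⟫ / ‖x‖ ^ 2)| ≤ |c| * (C + ‖h 0‖) := by
    rw [abs_mul]
    gcongr
    exact abs_inner_div_norm_sq_le (one_pos.trans_le hx) hgrowth
  exact mgf_sub_rate_le_of_abs_le hX htilt

end

/-- If `h : ℝ^d → ℝ^d` is Lipschitz with constant `C`, `X` has the Poisson distribution
with parameter `λT/M`, then for `p ≥ 1`, `z ∈ {-1, 1}` and `‖x‖ ≥ 1`,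
`E[exp (p z ⟨x, h x⟩ ‖x‖⁻² (X - λT/M))]
  ≤ exp ((e^{p(C+‖h 0‖)} + p (C + ‖h 0‖)) λT/M)`. -/
theorem poisson_taming_exp_bound (d M : ℕ) (hd : 0 < d) (hM : 0 < M)
    (lam T C : ℝ) (hlam : 0 < lam) (hT : 0 < T) (hC : 0 ≤ C)
    (h : EuclideanSpace ℝ (Fin d) → EuclideanSpace ℝ (Fin d))
    (hLip : ∀ x y, ‖h x - h y‖ ≤ C * ‖x - y‖)
    {Ω : Type*} [MeasurableSpace Ω] (P : Measure Ω) [IsProbabilityMeasure P]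
    (X : Ω → ℕ)
    (hX : ∀ k : ℕ, P {ω | X ω = k}
      = ENNReal.ofReal (Real.exp (-(lam * T / M)) * (lam * T / M) ^ k / (Nat.factorial k)))
    (p : ℝ) (hp : 1 ≤ p) (z : ℝ) (hz : z = -1 ∨ z = 1)
    (x : EuclideanSpace ℝ (Fin d)) (hx : 1 ≤ ‖x‖) :
    (∫ ω, Real.exp (p * z * (⟪x, h x⟫ / ‖x‖ ^ 2) * ((X ω : ℝ) - lam * T / M)) ∂P)
      ≤ Real.exp ((Real.exp (p * (C + ‖h 0‖)) + p * (C + ‖h 0‖)) * (lam * T / M)) := by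
  have habs : |p * z| = p := by
    rcases hz with rfl | rfl <;> simp [abs_of_nonneg (zero_le_one.trans hp)]
  lift lam * T / M to NNReal using (by positivity) with r
  simpa only [habs] using poisson_taming_exp_bound_general hx
    (by simpa only [sub_zero] using hLip x 0)
    (hasLaw_poissonMeasure_of_forall_measure_eq hX) (p * z)
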